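/- arXiv:2509.10459 — 6 statements merged into one kernel-verified Lean document; each statement's English description precedes it below -/
import Mathlib

section
/- Let (A, C_S) be a complete composed S-metric space with composed function α : [0,∞) → [0,∞), and let F : A → A be a mapping such that C_S(F q, F h, F w) ≤ r · C_S(q, h, w) for all q, h, w ∈ A and some fixed r ∈ (0,1). Assume: (1) α(k·s + t) ≤ k·α(s) + α(t) for all s, t, k ≥ 0; (2) α(0) = 0; (3) for every x₀ ∈ A, writing xₙ = Fⁿ x₀ and α^j for the j-fold iterate of α, the quantity Σ_{k=n+3}^{m−2} 2^{k−n−1} · α^{k−n+1}( r^k · C_S(x₀, x₀, x₁) ) + 2^{m−n−2} · α^{m−n−1}( r^m · C_S(x₀, x₀, x₁) ) tends to 0 as n, m → ∞ (with n < m). Then F has a unique fixed point in A. -/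
/-!
Sublinearity of `α` together with `α 0 = 0` forces `α` to be linear on `[0, ∞)`
(`composed_eq_mul`), so a composed `S`-metric of this kind is an `S_b`-metric: with `c = α 1`, the
function `d x y = C_S(x, x, y)` satisfies `d x y ≤ c (2 d x u + d y u)` and `d x y ≤ c d y x`.
In this setting a contraction has bounded orbits (`orbit_bounded`), for any ratio `r < 1`: compare
`x₀` with `F^k x₀` through `F^p x₀` for a `p` with `c² r ^ p ≤ 1/2`. Since
`d (F^n x₀) (F^(n+k) x₀) ≤ r ^ n d x₀ (F^k x₀)`, bounded orbits are Cauchy, and the limit is the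
fixed point.
-/

open Filter Function

/-- Scaling by `k` and by `k⁻¹` turns the sublinearity inequality into an equality. -/
theorem composed_eq_mul {α : ℝ → ℝ}
    (hα_sub : ∀ s t k : ℝ, 0 ≤ s → 0 ≤ t → 0 ≤ k → α (k * s + t) ≤ k * α s + α t)
    (hα0 : α 0 = 0) (t : ℝ) (ht : 0 ≤ t) : α t = α 1 * t := by
  rcases ht.eq_or_lt with rfl | ht
  · simp [hα0]
  · have h1 := hα_sub 1 0 t zero_le_one le_rfl ht.le
    have h2 := hα_sub t 0 t⁻¹ ht.le le_rfl (inv_nonneg.2 ht.le)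
    rw [inv_mul_cancel₀ ht.ne'] at h2
    simp only [mul_one, add_zero, hα0] at h1 h2
    have h3 := mul_le_mul_of_nonneg_left h2 ht.le
    rw [mul_inv_cancel_left₀ ht.ne'] at h3
    linarith

theorem iterate_contract {A : Type*} {d : A → A → ℝ} {F : A → A} {r : ℝ} (hr0 : 0 < r)
    (hF : ∀ x y, d (F x) (F y) ≤ r * d x y) (n : ℕ) (x y : A) :
    d (F^[n] x) (F^[n] y) ≤ r ^ n * d x y := by
  induction n with
  | zero => simp
  | succ n ih =>
    rw [iterate_succ_apply', iterate_succ_apply', pow_succ', mul_assoc]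
    exact (hF _ _).trans (mul_le_mul_of_nonneg_left ih hr0.le)

theorem orbit_bounded {A : Type*} {d : A → A → ℝ} {F : A → A} {r c : ℝ}
    (hr0 : 0 < r) (hr1 : r < 1) (hc : 0 ≤ c) (hd : ∀ x y, 0 ≤ d x y)
    (hsymm : ∀ x y, d x y ≤ c * d y x)
    (htri : ∀ x y u, d x y ≤ c * (2 * d x u + d y u))
    (hF : ∀ x y, d (F x) (F y) ≤ r * d x y) (x : A) :
    ∃ B, 0 ≤ B ∧ ∀ k, d x (F^[k] x) ≤ B := by
  obtain ⟨p, hp⟩ : ∃ p : ℕ, c ^ 2 * r ^ (p + 1) ≤ 1 / 2 := by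
    have h : Tendsto (fun p : ℕ => c ^ 2 * r ^ (p + 1)) atTop (nhds (c ^ 2 * 0)) :=
      ((tendsto_pow_atTop_nhds_zero_of_lt_one hr0.le hr1).comp (tendsto_add_atTop_nat 1)).const_mul _
    rw [mul_zero] at h
    exact (h.eventually (ge_mem_nhds (by norm_num))).exists
  have hS : 0 ≤ ∑ j ∈ Finset.range (p + 1), d x (F^[j] x) := Finset.sum_nonneg fun j _ => hd _ _
  have hT : 0 ≤ c * d x (F^[p + 1] x) := mul_nonneg hc (hd _ _)
  -- `B` dominates the first `p + 1` terms and satisfies `2 c d(x, F^(p+1) x) + B / 2 ≤ B`.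
  refine ⟨(∑ j ∈ Finset.range (p + 1), d x (F^[j] x)) + 4 * (c * d x (F^[p + 1] x)),
    by positivity, fun k => ?_⟩
  induction k using Nat.strong_induction_on with
  | _ k ih =>
    rcases lt_or_ge k (p + 1) with hk | hk
    · have := Finset.single_le_sum (f := fun j => d x (F^[j] x)) (fun j _ => hd _ _)
        (Finset.mem_range.2 hk)
      linarith
    · obtain ⟨j, rfl⟩ := Nat.exists_eq_add_of_le hk
      have h0 := ih j (by lia)
      have h1 := htri x (F^[p + 1 + j] x) (F^[p + 1] x)
      have h2 : d (F^[p + 1 + j] x) (F^[p + 1] x) ≤ r ^ (p + 1) * (c * d x (F^[j] x)) := by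
        rw [iterate_add_apply]
        exact (iterate_contract hr0 hF _ _ _).trans
          (mul_le_mul_of_nonneg_left (hsymm _ _) (by positivity))
      have h3 := mul_le_mul_of_nonneg_left h2 hc
      have h4 := mul_le_mul_of_nonneg_right hp (hd x (F^[j] x))
      nlinarith

theorem orbit_cauchy {A : Type*} {d : A → A → ℝ} {F : A → A} {r c : ℝ}
    (hr0 : 0 < r) (hr1 : r < 1) (hc : 0 ≤ c) (hd : ∀ x y, 0 ≤ d x y)
    (hsymm : ∀ x y, d x y ≤ c * d y x)
    (htri : ∀ x y u, d x y ≤ c * (2 * d x u + d y u))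
    (hF : ∀ x y, d (F x) (F y) ≤ r * d x y) (x : A) :
    Tendsto (fun p : ℕ × ℕ => d (F^[p.1] x) (F^[p.2] x)) atTop (nhds 0) := by
  obtain ⟨B, hB0, hB⟩ := orbit_bounded hr0 hr1 hc hd hsymm htri hF x
  have hpow := tendsto_pow_atTop_nhds_zero_of_lt_one hr0.le hr1
  have hlim : Tendsto (fun p : ℕ × ℕ => r ^ p.1 * B + c * (r ^ p.2 * B)) atTop (nhds 0) := by
    rw [← prod_atTop_atTop_eq]
    simpa using ((hpow.comp tendsto_fst).mul_const B).add
      (((hpow.comp tendsto_snd).mul_const B).const_mul c)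
  have hle : ∀ n k, d (F^[n] x) (F^[n + k] x) ≤ r ^ n * B := fun n k => by
    rw [iterate_add_apply]
    exact (iterate_contract hr0 hF _ _ _).trans
      (mul_le_mul_of_nonneg_left (hB k) (by positivity))
  refine squeeze_zero (fun _ => hd _ _) (fun ⟨n, m⟩ => ?_) hlim
  have hn : 0 ≤ r ^ n * B := by positivity
  have hm : 0 ≤ c * (r ^ m * B) := by positivity
  rcases le_total n m with h | h
  · obtain ⟨k, rfl⟩ := Nat.exists_eq_add_of_le h
    have := hle n k
    dsimp only
    linarith
  · obtain ⟨k, rfl⟩ := Nat.exists_eq_add_of_le h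
    have := (hsymm (F^[m + k] x) (F^[m] x)).trans (mul_le_mul_of_nonneg_left (hle m k) hc)
    dsimp only
    linarith

/-- Banach-type fixed point theorem in a complete composed
`S`-metric space. -/
theorem composed_S_metric_banach_fixed_point
    {A : Type*} [Nonempty A]
    (CS : A → A → A → ℝ) (α : ℝ → ℝ)
    -- `CS` takes values in `[0, ∞)`
    (hCS_nonneg : ∀ q h w, 0 ≤ CS q h w)
    -- `α` maps `[0, ∞)` to `[0, ∞)`
    (hα_nonneg : ∀ t, 0 ≤ t → 0 ≤ α t)
    -- axiom (i) of a composed S-metric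
    (hCS_eq : ∀ q h w, CS q h w = 0 ↔ q = h ∧ h = w)
    -- axiom (ii): the composed triangle inequality
    (hCS_tri : ∀ q h w u, CS q h w ≤ α (CS q q u) + α (CS h h u) + α (CS w w u))
    -- completeness: every Cauchy sequence converges
    (hcomplete : ∀ x : ℕ → A,
      Tendsto (fun p : ℕ × ℕ => CS (x p.1) (x p.1) (x p.2)) atTop (nhds 0) →
      ∃ l : A, Tendsto (fun n => CS (x n) (x n) l) atTop (nhds 0))
    (F : A → A) (r : ℝ) (hr0 : 0 < r) (hr1 : r < 1)
    -- the contraction condition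
    (hcontr : ∀ q h w, CS (F q) (F h) (F w) ≤ r * CS q h w)
    -- condition (1)
    (hα_sub : ∀ s t k : ℝ, 0 ≤ s → 0 ≤ t → 0 ≤ k → α (k * s + t) ≤ k * α s + α t)
    -- condition (2)
    (hα0 : α 0 = 0)
    -- condition (3)
    (hlim : ∀ x₀ : A, ∀ ε > (0 : ℝ), ∃ N : ℕ, ∀ n m : ℕ, N ≤ n → n < m →
      |(∑ k ∈ Finset.Icc (n + 3) (m - 2),
          (2 : ℝ) ^ (k - n - 1) * α^[k - n + 1] (r ^ k * CS x₀ x₀ (F x₀)))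
        + (2 : ℝ) ^ (m - n - 2) * α^[m - n - 1] (r ^ m * CS x₀ x₀ (F x₀))| < ε) :
    ∃! x : A, F x = x := by
  have hc : 0 ≤ α 1 := hα_nonneg 1 zero_le_one
  have hlin := composed_eq_mul hα_sub hα0
  have hself : ∀ q, CS q q q = 0 := fun q => (hCS_eq q q q).2 ⟨rfl, rfl⟩
  have htri : ∀ x y u, CS x x y ≤ α 1 * (2 * CS x x u + CS y y u) := fun x y u => by
    have h := hCS_tri x x y u
    rw [hlin _ (hCS_nonneg x x u), hlin _ (hCS_nonneg y y u)] at h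
    linarith
  have hsymm : ∀ x y, CS x x y ≤ α 1 * CS y y x := fun x y => by
    simpa [hself] using htri x y x
  have hF : ∀ x y, CS (F x) (F x) (F y) ≤ r * CS x x y := fun x y => hcontr x x y
  obtain ⟨x⟩ := ‹Nonempty A›
  obtain ⟨l, hl⟩ := hcomplete (fun n => F^[n] x)
    (orbit_cauchy (d := fun a b => CS a a b) hr0 hr1 hc (fun a b => hCS_nonneg a a b)
      hsymm htri hF x)
  -- The bound is taken through `F^(n+1) x`, the image under `F` of a point near `l`.
  have hbound : ∀ n, CS l l (F l) ≤ α 1 * (2 * (α 1 * CS (F^[n + 1] x) (F^[n + 1] x) l)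
      + α 1 * (r * CS (F^[n] x) (F^[n] x) l)) := fun n => by
    have h1 := hF (F^[n] x) l
    rw [← iterate_succ_apply' F n x] at h1
    have h2 := (hsymm (F l) (F^[n + 1] x)).trans (mul_le_mul_of_nonneg_left h1 hc)
    have h3 := hsymm l (F^[n + 1] x)
    exact (htri l (F l) (F^[n + 1] x)).trans (mul_le_mul_of_nonneg_left (by linarith) hc)
  have hlim0 : Tendsto (fun n => α 1 * (2 * (α 1 * CS (F^[n + 1] x) (F^[n + 1] x) l)
      + α 1 * (r * CS (F^[n] x) (F^[n] x) l))) atTop (nhds 0) := by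
    have hl1 := hl.comp (tendsto_add_atTop_nat 1)
    simpa using (((hl1.const_mul (α 1)).const_mul 2).add
      ((hl.const_mul r).const_mul (α 1))).const_mul (α 1)
  have hle : CS l l (F l) ≤ 0 := ge_of_tendsto' hlim0 hbound
  refine ⟨l, ((hCS_eq _ _ _).1 (le_antisymm hle (hCS_nonneg _ _ _))).2.symm, fun y hy => ?_⟩
  have hfix : F l = l := ((hCS_eq _ _ _).1 (le_antisymm hle (hCS_nonneg _ _ _))).2.symm
  have h := hF y l
  rw [hy, hfix] at h
  have h0 : CS y y l = 0 := by nlinarith [hCS_nonneg y y l]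
  exact ((hCS_eq _ _ _).1 h0).2
end

section
/- Let (A, C_S) be a composed S-metric space with composed function α : [0,∞) → [0,∞), and let F : A → A satisfy C_S(F q, F h, F w) ≤ r · C_S(q, h, w) for all q, h, w ∈ A and some fixed r ∈ (0,1). Assume α(k·s + t) ≤ k·α(s) + α(t) for all s, t, k ≥ 0, α(0) = 0, and, for a given x₀ ∈ A with xₙ = Fⁿ x₀ and α^j denoting the j-fold iterate of α, that Σ_{k=n+3}^{m−2} 2^{k−n−1} · α^{k−n+1}( r^k · C_S(x₀, x₀, x₁) ) + 2^{m−n−2} · α^{m−n−1}( r^m · C_S(x₀, x₀, x₁) ) tends to 0 as n, m → ∞ (with n < m). Then the Picard sequence (xₙ) is Cauchy, i.e. C_S(xₙ, xₙ, x_m) → 0 as n, m → ∞. -/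
/-!
Since `α 0 = 0`, subadditivity gives `α (k * 1 + 0) ≤ k * α 1` for `k ≥ 0`, so the triangle
inequality has a constant factor, as in a `b`-metric space, and
`CS q q w ≤ α 1 * CS w w q`. In such a space every contraction has Cauchy Picard sequences: for
`j` so large that `(α 1) ^ 2 * r ^ j ≤ 1 / 2`, going from `x₀` to `x_m` through `x_j` bounds
`CS x₀ x₀ x_m` by a constant plus half of `CS x₀ x₀ x_{m - j}`, so the orbit is bounded
(`orbit_bounded`); contracting `n` times then gives `CS x_n x_n x_m ≤ r ^ n * B` for `n ≤ m`,
and the relaxed symmetry covers `m < n`.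
-/

open Filter Function

/-- Boundedness of a two-index array `s n m` that is contracted by shifting both indices and
satisfies a relaxed triangle inequality and a relaxed symmetry with constant `c`. -/
theorem orbit_bounded_s2 (s : ℕ → ℕ → ℝ) (c r : ℝ) (hs : ∀ n m, 0 ≤ s n m) (hc : 0 ≤ c)
    (hr0 : 0 < r) (hr1 : r < 1)
    (htri : ∀ n m k, s n m ≤ 2 * c * s n k + c * s m k)
    (hsymm : ∀ n m, s n m ≤ c * s m n)
    (hshift : ∀ j n m, s (n + j) (m + j) ≤ r ^ j * s n m) :
    ∃ B, 0 ≤ B ∧ ∀ m, s 0 m ≤ B := by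
  obtain ⟨i, hi⟩ := exists_pow_lt_of_lt_one (show 0 < 1 / (2 * (c ^ 2 + 1)) by positivity) hr1
  -- The successor is taken so that the step `m ↦ m - j` below is strictly decreasing.
  obtain ⟨j, hj0, hj⟩ : ∃ j : ℕ, 0 < j ∧ c ^ 2 * r ^ j ≤ 1 / 2 := by
    refine ⟨i + 1, by omega, ?_⟩
    have h1 : r ^ (i + 1) ≤ r ^ i := pow_le_pow_of_le_one hr0.le hr1.le (by omega)
    rw [lt_div_iff₀ (by positivity)] at hi
    have h2 : 0 < r ^ i := by positivity
    have h3 := mul_le_mul_of_nonneg_left h1 (sq_nonneg c)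
    nlinarith
  have hsum : 0 ≤ ∑ l ∈ Finset.range j, s 0 l := Finset.sum_nonneg fun l _ => hs 0 l
  have hcs : 0 ≤ c * s 0 j := mul_nonneg hc (hs 0 j)
  refine ⟨∑ l ∈ Finset.range j, s 0 l + 4 * (c * s 0 j), by positivity, fun m => ?_⟩
  induction m using Nat.strong_induction_on with
  | _ m ih =>
    rcases lt_or_ge m j with hm | hm
    · have := Finset.single_le_sum (f := fun l => s 0 l) (fun l _ => hs 0 l)
        (Finset.mem_range.2 hm)
      linarith
    · have h1 := htri 0 m j
      have h2 := mul_le_mul_of_nonneg_left (hsymm m j) hc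
      have h3 := hshift j 0 (m - j)
      rw [Nat.zero_add, Nat.sub_add_cancel hm] at h3
      have h4 := mul_le_mul_of_nonneg_left h3 (sq_nonneg c)
      have h5 := mul_le_mul_of_nonneg_right hj (hs 0 (m - j))
      have h6 := ih (m - j) (by omega)
      nlinarith

/-- The Picard sequence of a contraction on a composed
`S`-metric space is Cauchy. -/
theorem composed_S_metric_picard_cauchy
    {A : Type*} [Nonempty A]
    (CS : A → A → A → ℝ) (α : ℝ → ℝ)
    (hCS_nonneg : ∀ q h w, 0 ≤ CS q h w)
    (hα_nonneg : ∀ t, 0 ≤ t → 0 ≤ α t)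
    (hCS_eq : ∀ q h w, CS q h w = 0 ↔ q = h ∧ h = w)
    (hCS_tri : ∀ q h w u, CS q h w ≤ α (CS q q u) + α (CS h h u) + α (CS w w u))
    (F : A → A) (r : ℝ) (hr0 : 0 < r) (hr1 : r < 1)
    (hcontr : ∀ q h w, CS (F q) (F h) (F w) ≤ r * CS q h w)
    (hα_sub : ∀ s t k : ℝ, 0 ≤ s → 0 ≤ t → 0 ≤ k → α (k * s + t) ≤ k * α s + α t)
    (hα0 : α 0 = 0)
    (x₀ : A)
    (hlim : ∀ ε > (0 : ℝ), ∃ N : ℕ, ∀ n m : ℕ, N ≤ n → n < m →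
      |(∑ k ∈ Finset.Icc (n + 3) (m - 2),
          (2 : ℝ) ^ (k - n - 1) * α^[k - n + 1] (r ^ k * CS x₀ x₀ (F x₀)))
        + (2 : ℝ) ^ (m - n - 2) * α^[m - n - 1] (r ^ m * CS x₀ x₀ (F x₀))| < ε) :
    Tendsto (fun p : ℕ × ℕ => CS (F^[p.1] x₀) (F^[p.1] x₀) (F^[p.2] x₀))
      atTop (nhds 0) := by
  have hc : 0 ≤ α 1 := hα_nonneg 1 zero_le_one
  -- Subadditivity at `s = 1`, `t = 0`, with the argument in the role of `k`.
  have hα_le : ∀ t, 0 ≤ t → α t ≤ α 1 * t := fun t ht => by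
    have h := hα_sub 1 0 t zero_le_one le_rfl ht
    simp only [mul_one, add_zero, hα0] at h
    linarith
  have htri : ∀ q w u, CS q q w ≤ 2 * α 1 * CS q q u + α 1 * CS w w u := fun q w u => by
    have h1 := hCS_tri q q w u
    have h2 := hα_le _ (hCS_nonneg q q u)
    have h3 := hα_le _ (hCS_nonneg w w u)
    linarith
  have hsymm : ∀ q w, CS q q w ≤ α 1 * CS w w q := fun q w => by
    have h := htri q w q
    rw [(hCS_eq q q q).2 ⟨rfl, rfl⟩] at h
    linarith
  have hshift : ∀ j n m : ℕ, CS (F^[n + j] x₀) (F^[n + j] x₀) (F^[m + j] x₀) ≤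
      r ^ j * CS (F^[n] x₀) (F^[n] x₀) (F^[m] x₀) := fun j n m => by
    induction j with
    | zero => simp
    | succ j ih =>
      rw [← Nat.add_assoc, ← Nat.add_assoc, iterate_succ_apply', iterate_succ_apply', pow_succ']
      have h1 := hcontr (F^[n + j] x₀) (F^[n + j] x₀) (F^[m + j] x₀)
      have h2 := mul_le_mul_of_nonneg_left ih hr0.le
      linarith
  obtain ⟨B, hB0, hB⟩ := orbit_bounded_s2
    (fun n m => CS (F^[n] x₀) (F^[n] x₀) (F^[m] x₀)) (α 1) r
    (fun _ _ => hCS_nonneg _ _ _) hc hr0 hr1 (fun _ _ _ => htri _ _ _)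
    (fun _ _ => hsymm _ _) hshift
  have hle : ∀ n m : ℕ, n ≤ m → CS (F^[n] x₀) (F^[n] x₀) (F^[m] x₀) ≤ r ^ n * B :=
    fun n m hnm => by
      have h := hshift n 0 (m - n)
      rw [Nat.zero_add, Nat.sub_add_cancel hnm] at h
      exact h.trans (mul_le_mul_of_nonneg_left (hB _) (by positivity))
  have hlim0 : Tendsto (fun p : ℕ × ℕ => r ^ p.1 * B + α 1 * (r ^ p.2 * B)) atTop (nhds 0) := by
    have h := tendsto_pow_atTop_nhds_zero_of_lt_one hr0.le hr1
    rw [← prod_atTop_atTop_eq]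
    simpa using ((h.comp tendsto_fst).mul_const B).add
      (((h.comp tendsto_snd).mul_const B).const_mul (α 1))
  refine squeeze_zero (fun _ => hCS_nonneg _ _ _) (fun p => ?_) hlim0
  have h1 : 0 ≤ r ^ p.1 * B := by positivity
  have h2 : 0 ≤ α 1 * (r ^ p.2 * B) := by positivity
  rcases le_total p.1 p.2 with h | h
  · linarith [hle _ _ h]
  · linarith [hsymm (F^[p.1] x₀) (F^[p.2] x₀), mul_le_mul_of_nonneg_left (hle _ _ h) hc]
end

section
/- Let (A, C_S) be a symmetric complete composed S-metric space with composed function α : [0,∞) → [0,∞), let M ∈ 𝓜_f with associated constant r ∈ [0,1), and let F : A → A satisfy C_S(F o, F o, F h) ≤ M( C_S(o,o,h), C_S(F o, F o, o), C_S(F o, F o, h), C_S(F h, F h, o), C_S(F h, F h, h) ) for all o, h ∈ A. Assume: (i) α(k·s + t) ≤ k·α(s) + α(t) for all s, t, k ≥ 0; (ii) α(0) = 0; (iii) for every x₀ ∈ A, writing xₙ = Fⁿ x₀, α(C_S(xₙ, xₙ, x_{n+1})) ≤ C_S(xₙ, xₙ, x_{n+1}) for all n; (iv) with α^j the j-fold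 iterate of α, Σ_{k=n+3}^{m−2} 2^{k−n−1} · α^{k−n+1}( r^k · C_S(x₀, x₀, x₁) ) + 2^{m−n−3} · α^{m−n−1}( r^m · C_S(x₀, x₀, x₁) ) tends to 0 as n, m → ∞ (with n < m). Then F has a unique fixed point in A. -/
/-!
The inequality `α (k * s) ≤ k * α s` (the case `t = 0` of the hypothesis on `α (k * s + t)`),
used with both `k` and `k⁻¹`, forces `α t = c * t` on `[0, ∞)`, where `c = α 1`. The bound on `α`
along orbits then reads `c * e ≤ e` for `e = C_S(x, x, F x)`, so `c ≤ 1` as soon as `F` moves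
some point. In that case `d(x, y) = C_S(x, x, y)` is symmetric and satisfies
`d(x, y) ≤ 2 d(x, u) + d(u, y)`. By the first condition on `M`, the steps of a Picard orbit decay
like `r ^ n`, so the orbit is Cauchy by comparison with a geometric series
(`cauchy_of_geometric`). Passing to the limit in the contraction condition, the same condition on
`M` with `o = 0` shows that the limit is fixed; the second condition on `M` gives uniqueness.
-/

open Filter Function

/-- The subadditivity hypothesis and `α 0 = 0` force `α` to be linear on `[0, ∞)`. -/
lemma alpha_eq_mul (α : ℝ → ℝ)
    (hα_sub : ∀ s t k : ℝ, 0 ≤ s → 0 ≤ t → 0 ≤ k → α (k * s + t) ≤ k * α s + α t)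
    (hα0 : α 0 = 0) (t : ℝ) (ht : 0 ≤ t) : α t = α 1 * t := by
  rcases ht.eq_or_lt with rfl | ht
  · simp [hα0]
  · have h1 := hα_sub 1 0 t zero_le_one le_rfl ht.le
    have h2 := hα_sub t 0 t⁻¹ ht.le le_rfl (inv_nonneg.2 ht.le)
    rw [add_zero, inv_mul_cancel₀ ht.ne', hα0, add_zero] at h2
    rw [add_zero, mul_one, hα0, add_zero] at h1
    have h3 : t * α 1 ≤ α t := by
      have := mul_le_mul_of_nonneg_left h2 ht.le
      rwa [mul_inv_cancel_left₀ ht.ne'] at this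
    linarith

/-- Geometrically decaying steps make a sequence Cauchy under the relaxed triangle inequality
`d x y ≤ 2 * d x u + d u y`: iterating it along the sequence only puts the factor `2` on single
steps. -/
lemma cauchy_of_geometric {A : Type*} (d : A → A → ℝ) (hd : ∀ x y, 0 ≤ d x y)
    (hself : ∀ x, d x x = 0) (hsymm : ∀ x y, d x y = d y x)
    (htri : ∀ x y u, d x y ≤ 2 * d x u + d u y)
    (x : ℕ → A) (D r : ℝ) (hD : 0 ≤ D) (hr0 : 0 ≤ r) (hr1 : r < 1)
    (hx : ∀ n, d (x n) (x (n + 1)) ≤ r ^ n * D) :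
    Tendsto (fun p : ℕ × ℕ => d (x p.1) (x p.2)) atTop (nhds 0) := by
  have h1r : 0 < 1 - r := by linarith
  obtain ⟨K, hK⟩ : ∃ K, K = 2 * D / (1 - r) := ⟨_, rfl⟩
  have hK0 : 0 ≤ K := by rw [hK]; positivity
  have hKD : K * (1 - r) = 2 * D := by rw [hK]; field_simp
  have key : ∀ j n, d (x n) (x (n + j)) ≤ K * r ^ n := by
    intro j
    induction j with
    | zero => intro n; rw [add_zero, hself]; positivity
    | succ j ih =>
      intro n
      have h1 := ih (n + 1)
      rw [show n + 1 + j = n + (j + 1) by ring] at h1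
      have h2 := htri (x n) (x (n + (j + 1))) (x (n + 1))
      have h3 := hx n
      have h4 : K * r ^ n = 2 * (r ^ n * D) + K * r ^ (n + 1) := by
        rw [pow_succ]; linear_combination r ^ n * hKD
      linarith
  have hpow : Tendsto (fun n : ℕ => K * r ^ n) atTop (nhds 0) := by
    simpa using (tendsto_pow_atTop_nhds_zero_of_lt_one hr0 hr1).const_mul K
  have hlim : Tendsto (fun p : ℕ × ℕ => K * r ^ p.1 + K * r ^ p.2) atTop (nhds 0) := by
    rw [← prod_atTop_atTop_eq]
    simpa using (hpow.comp tendsto_fst).add (hpow.comp tendsto_snd)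
  refine squeeze_zero (fun p => hd _ _) (fun p => ?_) hlim
  have p1 : 0 ≤ K * r ^ p.1 := by positivity
  have p2 : 0 ≤ K * r ^ p.2 := by positivity
  rcases le_total p.1 p.2 with h | h
  · obtain ⟨j, hj⟩ := Nat.exists_eq_add_of_le h
    have := key j p.1
    rw [← hj] at this
    linarith
  · obtain ⟨j, hj⟩ := Nat.exists_eq_add_of_le h
    have := key j p.2
    rw [← hj, hsymm] at this
    linarith

/-- Fixed point theorem for `M_f`-contractions on a symmetric
complete composed `S`-metric space. -/
theorem composed_S_metric_Mf_fixed_point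
    {A : Type*} [Nonempty A]
    (CS : A → A → A → ℝ) (α : ℝ → ℝ)
    (hCS_nonneg : ∀ q h w, 0 ≤ CS q h w)
    (hα_nonneg : ∀ t, 0 ≤ t → 0 ≤ α t)
    (hCS_eq : ∀ q h w, CS q h w = 0 ↔ q = h ∧ h = w)
    (hCS_tri : ∀ q h w u, CS q h w ≤ α (CS q q u) + α (CS h h u) + α (CS w w u))
    -- symmetry
    (hsymm : ∀ q h, CS q q h = CS h h q)
    -- completeness
    (hcomplete : ∀ x : ℕ → A,
      Tendsto (fun p : ℕ × ℕ => CS (x p.1) (x p.1) (x p.2)) atTop (nhds 0) →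
      ∃ l : A, Tendsto (fun n => CS (x n) (x n) l) atTop (nhds 0))
    -- `M ∈ 𝓜_f` with constant `r ∈ [0, 1)`
    (M : ℝ → ℝ → ℝ → ℝ → ℝ → ℝ) (r : ℝ) (hr0 : 0 ≤ r) (hr1 : r < 1)
    (hM_nonneg : ∀ t₁ t₂ t₃ t₄ t₅ : ℝ, 0 ≤ t₁ → 0 ≤ t₂ → 0 ≤ t₃ → 0 ≤ t₄ → 0 ≤ t₅ →
      0 ≤ M t₁ t₂ t₃ t₄ t₅)
    (hM_cont : ContinuousOn (fun p : ℝ × ℝ × ℝ × ℝ × ℝ =>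
        M p.1 p.2.1 p.2.2.1 p.2.2.2.1 p.2.2.2.2)
      {p : ℝ × ℝ × ℝ × ℝ × ℝ |
        0 ≤ p.1 ∧ 0 ≤ p.2.1 ∧ 0 ≤ p.2.2.1 ∧ 0 ≤ p.2.2.2.1 ∧ 0 ≤ p.2.2.2.2})
    -- condition (M1)
    (hM1 : ∀ o h w : ℝ, 0 ≤ o → 0 ≤ h → 0 ≤ w →
      h ≤ M o o 0 w h → w ≤ 2 * o + h → h ≤ r * o)
    -- condition (M2)
    (hM2 : ∀ h : ℝ, 0 ≤ h → h ≤ M h 0 h h 0 → h = 0)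
    (F : A → A)
    -- the `M_f`-contraction condition
    (hcontr : ∀ o h, CS (F o) (F o) (F h) ≤
      M (CS o o h) (CS (F o) (F o) o) (CS (F o) (F o) h)
        (CS (F h) (F h) o) (CS (F h) (F h) h))
    -- condition (i)
    (hα_sub : ∀ s t k : ℝ, 0 ≤ s → 0 ≤ t → 0 ≤ k → α (k * s + t) ≤ k * α s + α t)
    -- condition (ii)
    (hα0 : α 0 = 0)
    -- condition (iii)
    (hα_le : ∀ x₀ : A, ∀ n : ℕ,
      α (CS (F^[n] x₀) (F^[n] x₀) (F^[n + 1] x₀)) ≤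
        CS (F^[n] x₀) (F^[n] x₀) (F^[n + 1] x₀))
    -- condition (iv)
    (hlim : ∀ x₀ : A, ∀ ε > (0 : ℝ), ∃ N : ℕ, ∀ n m : ℕ, N ≤ n → n < m →
      |(∑ k ∈ Finset.Icc (n + 3) (m - 2),
          (2 : ℝ) ^ (k - n - 1) * α^[k - n + 1] (r ^ k * CS x₀ x₀ (F x₀)))
        + (2 : ℝ) ^ (m - n - 3) * α^[m - n - 1] (r ^ m * CS x₀ x₀ (F x₀))| < ε) :
    ∃! x : A, F x = x := by
  have hlin := alpha_eq_mul α hα_sub hα0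
  have hself : ∀ x, CS x x x = 0 := fun x => (hCS_eq x x x).2 ⟨rfl, rfl⟩
  have huniq : ∀ x y, F x = x → F y = y → x = y := by
    intro x y hx hy
    have h := hcontr x y
    rw [hx, hy, hself, hself, ← hsymm x y] at h
    exact ((hCS_eq x x y).1 (hM2 _ (hCS_nonneg _ _ _) h)).2
  suffices hex : ∃ x, F x = x by
    obtain ⟨x, hx⟩ := hex
    exact ⟨x, hx, fun y hy => huniq y x hy hx⟩
  obtain ⟨x₀⟩ := ‹Nonempty A›
  by_cases hx₀ : F x₀ = x₀
  · exact ⟨x₀, hx₀⟩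
  have hpos : 0 < CS x₀ x₀ (F x₀) :=
    lt_of_le_of_ne (hCS_nonneg _ _ _) fun h => hx₀ ((hCS_eq _ _ _).1 h.symm).2.symm
  have hc1 : α 1 ≤ 1 := by
    have h := hα_le x₀ 0
    simp only [iterate_zero, id_eq, zero_add, iterate_one] at h
    rw [hlin _ hpos.le] at h
    exact le_of_mul_le_mul_right (by linarith) hpos
  have hα_id : ∀ t, 0 ≤ t → α t ≤ t := fun t ht => by
    rw [hlin t ht]; exact mul_le_of_le_one_left ht hc1
  have htri : ∀ x y u, CS x x y ≤ 2 * CS x x u + CS u u y := by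
    intro x y u
    have h := hCS_tri x x y u
    have h1 := hα_id _ (hCS_nonneg x x u)
    have h2 := hα_id _ (hCS_nonneg y y u)
    rw [hsymm u y]
    linarith
  obtain ⟨x, hx⟩ : ∃ x : ℕ → A, x = fun n => F^[n] x₀ := ⟨_, rfl⟩
  have hxs : ∀ n, F (x n) = x (n + 1) := fun n => by
    rw [hx]; exact (iterate_succ_apply' F n x₀).symm
  have hstep : ∀ n, CS (x n) (x n) (x (n + 1)) ≤ r ^ n * CS x₀ x₀ (F x₀) := by
    intro n
    induction n with
    | zero => simp [hx]
    | succ n ih =>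
      have h := hcontr (x n) (x (n + 1))
      rw [hxs, hxs, hself, hsymm (x (n + 1)) (x n), hsymm (x (n + 1 + 1)) (x (n + 1))] at h
      have hw := htri (x n) (x (n + 1 + 1)) (x (n + 1))
      rw [hsymm (x n) (x (n + 1 + 1))] at hw
      have h1 := hM1 _ _ _ (hCS_nonneg _ _ _) (hCS_nonneg _ _ _) (hCS_nonneg _ _ _) h hw
      calc _ ≤ _ := h1
        _ ≤ r * (r ^ n * CS x₀ x₀ (F x₀)) := mul_le_mul_of_nonneg_left ih hr0
        _ = _ := by ring
  obtain ⟨l, hl⟩ := hcomplete x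
    (cauchy_of_geometric (fun a b => CS a a b) (fun _ _ => hCS_nonneg _ _ _) hself hsymm htri
      x _ r hpos.le hr0 hr1 hstep)
  refine ⟨l, ?_⟩
  have hl1 : Tendsto (fun n => CS (x (n + 1)) (x (n + 1)) l) atTop (nhds 0) :=
    hl.comp (tendsto_add_atTop_nat 1)
  have hd0 : Tendsto (fun n => CS (x (n + 1)) (x (n + 1)) (x n)) atTop (nhds 0) := by
    refine squeeze_zero (fun n => hCS_nonneg _ _ _) (fun n => ?_)
      (by simpa using (hl1.const_mul 2).add hl)
    have := htri (x (n + 1)) (x n) l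
    rwa [hsymm l (x n)] at this
  -- `htri`, applied in both directions, gives `|d(F l, x n) - d(F l, l)| ≤ 2 d(x n, l)`.
  have hFl : Tendsto (fun n => CS (F l) (F l) (x n)) atTop (nhds (CS (F l) (F l) l)) := by
    refine tendsto_of_tendsto_of_tendsto_of_le_of_le
      (g := fun n => CS (F l) (F l) l - 2 * CS (x n) (x n) l)
      (h := fun n => CS (F l) (F l) l + 2 * CS (x n) (x n) l)
      (by simpa using tendsto_const_nhds.sub (hl.const_mul 2))
      (by simpa using tendsto_const_nhds.add (hl.const_mul 2)) (fun n => ?_) (fun n => ?_)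
    · have := htri l (F l) (x n)
      rw [hsymm l (F l), hsymm l (x n), hsymm (x n) (F l)] at this
      show _ - _ ≤ _
      linarith
    · have := htri (x n) (F l) l
      rw [hsymm l (F l), hsymm (x n) (F l)] at this
      show _ ≤ _ + _
      linarith
  have hFl1 : Tendsto (fun n => CS (x (n + 1)) (x (n + 1)) (F l)) atTop
      (nhds (CS (F l) (F l) l)) := by
    simpa only [comp_def, hsymm (F l)] using hFl.comp (tendsto_add_atTop_nat 1)
  have hMlim := (hM_cont (0, 0, 0, CS (F l) (F l) l, CS (F l) (F l) l)
    ⟨le_rfl, le_rfl, le_rfl, hCS_nonneg _ _ _, hCS_nonneg _ _ _⟩).tendsto.comp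
    (tendsto_nhdsWithin_iff.2 ⟨hl.prodMk_nhds (hd0.prodMk_nhds (hl1.prodMk_nhds
      (hFl.prodMk_nhds tendsto_const_nhds))), Eventually.of_forall fun n =>
      ⟨hCS_nonneg _ _ _, hCS_nonneg _ _ _, hCS_nonneg _ _ _, hCS_nonneg _ _ _,
        hCS_nonneg _ _ _⟩⟩)
  have hle := le_of_tendsto_of_tendsto' hFl1 hMlim fun n => by
    have h := hcontr (x n) l
    rw [hxs] at h
    exact h
  have h0 := hM1 0 _ _ le_rfl (hCS_nonneg _ _ _) (hCS_nonneg _ _ _) hle (by linarith)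
  rw [mul_zero] at h0
  exact ((hCS_eq _ _ _).1 (le_antisymm h0 (hCS_nonneg _ _ _))).2
end

section
/- Let (A, C_S) be a symmetric complete composed S-metric space with composed function α : [0,∞) → [0,∞), and let F : A → A satisfy the Kannan-type condition C_S(F o, F o, F h) ≤ a·( C_S(F o, F o, o) + C_S(F h, F h, h) ) for all o, h ∈ A and some a ∈ (0, 1/2). Set r = a/(1−a) ∈ (0,1). Assume: (i) α(k·s + t) ≤ k·α(s) + α(t) for all s, t, k ≥ 0; (ii) α(0) = 0; (iii) for every x₀ ∈ A, writing xₙ = Fⁿ x₀, α(C_S(xₙ, xₙ, x_{n+1})) ≤ C_S(xₙ, xₙ, x_{n+1}) for all n; (iv) with α^j the j-fold iterate of α, Σ_{k=n+3}^{m−2} 2^{k−n−1} · α^{k−n+1}( r^k · C_S(x₀, x₀, x₁) ) + 2^{m−n−3} · α^{m−n−1}( r^m · C_S(x₀, x₀, x₁) ) tends to 0 as n, m → ∞ (with n < m). Then F has a unique fixed point in A. -/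
/-!
Write `d x y = CS x x y`, let `x n` be a Picard orbit, `d n = d (x n) (x (n + 1))` and `r = a / (1 - a)`.
The Kannan inequality for consecutive points gives `d (n + 1) ≤ r * d n`, so `d n → 0`. Applied to
two arbitrary points of the orbit it gives `d (x (n + 1)) (x (m + 1)) ≤ a * (d n + d m)`, so the orbit
is Cauchy by the contraction alone, hence converges to some `l`.

Suppose that `D = d (F l) l` is positive. The hypothesis `hα_le` at `x₀ = l`, `n = 0` says `α D ≤ D`, and
by `hα_sub` and `hα0`, `α (k * D) ≤ k * α D`, so `α s ≤ s` for every `s ≥ 0`. The triangle inequality through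
`x (n + 1)` then gives `D ≤ 2 * a * (D + d n) + d l (x (n + 1))`, and in the limit `D ≤ 2 * a * D`,
which contradicts `2 * a < 1`.
-/

open Filter Function

/-- The geometric decay behind the Kannan contraction: `d (n + 1) ≤ a * (d n + d (n + 1))` is
equivalent to `d (n + 1) ≤ a / (1 - a) * d n`, and `a / (1 - a) < 1` because `a < 1 / 2`. -/
theorem tendsto_zero_of_kannan (d : ℕ → ℝ) (a : ℝ) (ha0 : 0 < a) (ha1 : a < 1 / 2)
    (hd0 : ∀ n, 0 ≤ d n) (hd : ∀ n, d (n + 1) ≤ a * (d n + d (n + 1))) :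
    Tendsto d atTop (nhds 0) := by
  have h1 : 0 < 1 - a := by linarith
  have hr0 : 0 ≤ a / (1 - a) := by positivity
  have hr1 : a / (1 - a) < 1 := by rw [div_lt_one h1]; linarith
  have hstep : ∀ n, d (n + 1) ≤ a / (1 - a) * d n := by
    intro n
    rw [div_mul_eq_mul_div, le_div_iff₀ h1]
    linarith [hd n]
  have hgeo : ∀ n, d n ≤ (a / (1 - a)) ^ n * d 0 := by
    intro n
    induction n with
    | zero => simp
    | succ n ih =>
      calc d (n + 1) ≤ a / (1 - a) * d n := hstep n
        _ ≤ a / (1 - a) * ((a / (1 - a)) ^ n * d 0) := by gcongr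
        _ = (a / (1 - a)) ^ (n + 1) * d 0 := by ring
  refine squeeze_zero hd0 hgeo ?_
  simpa using (tendsto_pow_atTop_nhds_zero_of_lt_one hr0 hr1).mul_const (d 0)

/-- Kannan-type fixed point theorem on a symmetric complete
composed `S`-metric space. -/
theorem composed_S_metric_kannan_fixed_point
    {A : Type*} [Nonempty A]
    (CS : A → A → A → ℝ) (α : ℝ → ℝ)
    (hCS_nonneg : ∀ q h w, 0 ≤ CS q h w)
    (hα_nonneg : ∀ t, 0 ≤ t → 0 ≤ α t)
    (hCS_eq : ∀ q h w, CS q h w = 0 ↔ q = h ∧ h = w)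
    (hCS_tri : ∀ q h w u, CS q h w ≤ α (CS q q u) + α (CS h h u) + α (CS w w u))
    (hsymm : ∀ q h, CS q q h = CS h h q)
    (hcomplete : ∀ x : ℕ → A,
      Tendsto (fun p : ℕ × ℕ => CS (x p.1) (x p.1) (x p.2)) atTop (nhds 0) →
      ∃ l : A, Tendsto (fun n => CS (x n) (x n) l) atTop (nhds 0))
    (F : A → A) (a : ℝ) (ha0 : 0 < a) (ha1 : a < 1 / 2)
    -- the Kannan-type contraction condition
    (hcontr : ∀ o h, CS (F o) (F o) (F h) ≤
      a * (CS (F o) (F o) o + CS (F h) (F h) h))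
    -- condition (i)
    (hα_sub : ∀ s t k : ℝ, 0 ≤ s → 0 ≤ t → 0 ≤ k → α (k * s + t) ≤ k * α s + α t)
    -- condition (ii)
    (hα0 : α 0 = 0)
    -- condition (iii)
    (hα_le : ∀ x₀ : A, ∀ n : ℕ,
      α (CS (F^[n] x₀) (F^[n] x₀) (F^[n + 1] x₀)) ≤
        CS (F^[n] x₀) (F^[n] x₀) (F^[n + 1] x₀))
    -- condition (iv), with r = a / (1 - a)
    (hlim : ∀ x₀ : A, ∀ ε > (0 : ℝ), ∃ N : ℕ, ∀ n m : ℕ, N ≤ n → n < m →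
      |(∑ k ∈ Finset.Icc (n + 3) (m - 2),
          (2 : ℝ) ^ (k - n - 1) *
            α^[k - n + 1] ((a / (1 - a)) ^ k * CS x₀ x₀ (F x₀)))
        + (2 : ℝ) ^ (m - n - 3) *
            α^[m - n - 1] ((a / (1 - a)) ^ m * CS x₀ x₀ (F x₀))| < ε) :
    ∃! x : A, F x = x := by
  obtain ⟨x₀⟩ := ‹Nonempty A›
  set x : ℕ → A := fun n => F^[n] x₀ with hx
  have hxs : ∀ n, x (n + 1) = F (x n) := fun n => iterate_succ_apply' F n x₀
  set d : ℕ → ℝ := fun n => CS (x n) (x n) (x (n + 1)) with hd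
  have hback : ∀ n, CS (F (x n)) (F (x n)) (x n) = d n := by
    intro n
    rw [hsymm, ← hxs]
  have hd_lim : Tendsto d atTop (nhds 0) := by
    refine tendsto_zero_of_kannan d a ha0 ha1 (fun n => hCS_nonneg _ _ _) (fun n => ?_)
    have h := hcontr (x n) (x (n + 1))
    rw [hback, hback, ← hxs, ← hxs] at h
    exact h
  have hcauchy : Tendsto (fun p : ℕ × ℕ => CS (x (p.1 + 1)) (x (p.1 + 1)) (x (p.2 + 1)))
      atTop (nhds 0) := by
    have h1 : Tendsto (fun p : ℕ × ℕ => d p.1) atTop (nhds 0) :=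
      hd_lim.comp (by rw [← prod_atTop_atTop_eq]; exact tendsto_fst)
    have h2 : Tendsto (fun p : ℕ × ℕ => d p.2) atTop (nhds 0) :=
      hd_lim.comp (by rw [← prod_atTop_atTop_eq]; exact tendsto_snd)
    refine squeeze_zero (fun p => hCS_nonneg _ _ _) (fun p => ?_)
      (g := fun p : ℕ × ℕ => a * (d p.1 + d p.2)) (by simpa using (h1.add h2).const_mul a)
    have h := hcontr (x p.1) (x p.2)
    rw [hback, hback, ← hxs, ← hxs] at h
    exact h
  -- Completeness is applied to the shifted orbit, each of whose points is an image under `F`.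
  obtain ⟨l, hl⟩ := hcomplete (fun n => x (n + 1)) hcauchy
  have hfix : F l = l := by
    by_contra hne
    have hD : 0 < CS (F l) (F l) l :=
      lt_of_le_of_ne (hCS_nonneg _ _ _) fun h => hne ((hCS_eq _ _ _).1 h.symm).2
    set D := CS (F l) (F l) l with hDdef
    have hαD : α D ≤ D := by
      have h := hα_le l 0
      simp only [iterate_zero, id, zero_add, iterate_one] at h
      rwa [hsymm, ← hDdef] at h
    have hα : ∀ s, 0 ≤ s → α s ≤ s := by
      intro s hs
      have h := hα_sub D 0 (s / D) hD.le le_rfl (by positivity)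
      rw [div_mul_cancel₀ s hD.ne', add_zero, hα0, add_zero] at h
      calc α s ≤ s / D * α D := h
        _ ≤ s / D * D := by gcongr
        _ = s := div_mul_cancel₀ s hD.ne'
    have hbound : ∀ n, D ≤ 2 * (a * (D + d n)) + CS (x (n + 1)) (x (n + 1)) l := by
      intro n
      have h1 := hCS_tri (F l) (F l) l (x (n + 1))
      have h2 := hα _ (hCS_nonneg (F l) (F l) (x (n + 1)))
      have h3 := hα _ (hCS_nonneg l l (x (n + 1)))
      have h4 := hcontr l (x n)
      rw [hback, ← hxs] at h4
      rw [hsymm l] at h1 h3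
      linarith
    have hle : D ≤ 2 * (a * (D + 0)) + 0 :=
      ge_of_tendsto' (((hd_lim.const_add D).const_mul a |>.const_mul 2).add hl) hbound
    nlinarith
  refine ⟨l, hfix, fun y hy => ?_⟩
  have hself : ∀ z, CS z z z = 0 := fun z => (hCS_eq z z z).2 ⟨rfl, rfl⟩
  have h := hcontr y l
  rw [hfix, show F y = y from hy, hself, hself, add_zero, mul_zero] at h
  exact ((hCS_eq _ _ _).1 (le_antisymm h (hCS_nonneg _ _ _))).2
end

section
/- Let (A, C_S) be a symmetric complete composed S-metric space with composed function α : [0,∞) → [0,∞), and let F : A → A satisfy the Bianchini-type condition C_S(F o, F o, F h) ≤ a·max{ C_S(F o, F o, o), C_S(F h, F h, h) } for all o, h ∈ A and some a ∈ [0,1). Assume: (i) α(k·s + t) ≤ k·α(s) + α(t) for all s, t, k ≥ 0; (ii) α(0) = 0; (iii) for every x₀ ∈ A, writing xₙ = Fⁿ x₀, α(C_S(xₙ, xₙ, x_{n+1})) ≤ C_S(xₙ, xₙ, x_{n+1}) for all n; (iv) with α^j the j-fold iterate of α, Σ_{k=n+3}^{m−2} 2^{k−n−1} · α^{k−n+1}(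 a^k · C_S(x₀, x₀, x₁) ) + 2^{m−n−3} · α^{m−n−1}( a^m · C_S(x₀, x₀, x₁) ) tends to 0 as n, m → ∞ (with n < m). Then F has a unique fixed point in A. -/
open Filter Function

/-!
Write `d x y = CS x x y`. The Bianchini condition at `x, F x` shows that `d (F x) x` shrinks by the
factor `a` along an orbit, and at two points of one orbit it then bounds `d (xₙ₊₁) (xₘ₊₁)` by
`(aⁿ + aᵐ) d (F x₀) x₀`, so orbits are Cauchy without any chaining through the triangle inequality.

Let `l` be the limit of an orbit and `D = d l (F l)`; suppose `D ≠ 0`. Condition (iii) for the orbit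
starting at `l` says `α D ≤ D`, and `α (k * D) ≤ k * α D` with `k = t / D` spreads this to `α t ≤ t`
for every `t ≥ 0`. Letting `n → ∞` in the triangle inequality for `d l (F l)` through `xₙ₊₁` then
yields `D ≤ a * D`, which is absurd.
-/

/-- Bianchini-type fixed point theorem on a symmetric complete
composed `S`-metric space. -/
theorem composed_S_metric_bianchini_fixed_point
    {A : Type*} [Nonempty A]
    (CS : A → A → A → ℝ) (α : ℝ → ℝ)
    (hCS_nonneg : ∀ q h w, 0 ≤ CS q h w)
    (hα_nonneg : ∀ t, 0 ≤ t → 0 ≤ α t)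
    (hCS_eq : ∀ q h w, CS q h w = 0 ↔ q = h ∧ h = w)
    (hCS_tri : ∀ q h w u, CS q h w ≤ α (CS q q u) + α (CS h h u) + α (CS w w u))
    (hsymm : ∀ q h, CS q q h = CS h h q)
    (hcomplete : ∀ x : ℕ → A,
      Tendsto (fun p : ℕ × ℕ => CS (x p.1) (x p.1) (x p.2)) atTop (nhds 0) →
      ∃ l : A, Tendsto (fun n => CS (x n) (x n) l) atTop (nhds 0))
    (F : A → A) (a : ℝ) (ha0 : 0 ≤ a) (ha1 : a < 1)
    -- the Bianchini-type contraction condition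
    (hcontr : ∀ o h, CS (F o) (F o) (F h) ≤
      a * max (CS (F o) (F o) o) (CS (F h) (F h) h))
    -- condition (i)
    (hα_sub : ∀ s t k : ℝ, 0 ≤ s → 0 ≤ t → 0 ≤ k → α (k * s + t) ≤ k * α s + α t)
    -- condition (ii)
    (hα0 : α 0 = 0)
    -- condition (iii)
    (hα_le : ∀ x₀ : A, ∀ n : ℕ,
      α (CS (F^[n] x₀) (F^[n] x₀) (F^[n + 1] x₀)) ≤
        CS (F^[n] x₀) (F^[n] x₀) (F^[n + 1] x₀))
    -- condition (iv)
    (hlim : ∀ x₀ : A, ∀ ε > (0 : ℝ), ∃ N : ℕ, ∀ n m : ℕ, N ≤ n → n < m →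
      |(∑ k ∈ Finset.Icc (n + 3) (m - 2),
          (2 : ℝ) ^ (k - n - 1) * α^[k - n + 1] (a ^ k * CS x₀ x₀ (F x₀)))
        + (2 : ℝ) ^ (m - n - 3) * α^[m - n - 1] (a ^ m * CS x₀ x₀ (F x₀))| < ε) :
    ∃! x : A, F x = x := by
  have hα_mul : ∀ s k : ℝ, 0 ≤ s → 0 ≤ k → α (k * s) ≤ k * α s := by
    intro s k hs hk
    have h := hα_sub s 0 k hs le_rfl hk
    simpa [hα0] using h
  have hstep : ∀ x, CS (F (F x)) (F (F x)) (F x) ≤ a * CS (F x) (F x) x := by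
    intro x
    have h := hcontr (F x) x
    rcases max_cases (CS (F (F x)) (F (F x)) (F x)) (CS (F x) (F x) x) with ⟨h1, _⟩ | ⟨h1, _⟩
    · -- here `d (F (F x)) (F x) ≤ a * d (F (F x)) (F x)`, which forces it to vanish
      rw [h1] at h
      nlinarith [hCS_nonneg (F (F x)) (F (F x)) (F x),
        mul_nonneg ha0 (hCS_nonneg (F x) (F x) x)]
    · rwa [h1] at h
  obtain ⟨x₀⟩ := ‹Nonempty A›
  set E := CS (F x₀) (F x₀) x₀ with hE
  have hgeom : ∀ n : ℕ, CS (F (F^[n] x₀)) (F (F^[n] x₀)) (F^[n] x₀) ≤ a ^ n * E := by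
    intro n
    induction n with
    | zero => simp [hE]
    | succ n ih =>
      rw [iterate_succ_apply']
      calc _ ≤ a * CS (F (F^[n] x₀)) (F (F^[n] x₀)) (F^[n] x₀) := hstep _
        _ ≤ a * (a ^ n * E) := mul_le_mul_of_nonneg_left ih ha0
        _ = a ^ (n + 1) * E := by ring
  have hgeom0 : Tendsto (fun n : ℕ => a ^ n * E) atTop (nhds 0) := by
    simpa using (tendsto_pow_atTop_nhds_zero_of_lt_one ha0 ha1).mul_const E
  have hmax : ∀ x y, CS (F x) (F x) (F y) ≤ a * (CS (F x) (F x) x + CS (F y) (F y) y) :=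
    fun x y => (hcontr x y).trans (mul_le_mul_of_nonneg_left
      (max_le_add_of_nonneg (hCS_nonneg _ _ _) (hCS_nonneg _ _ _)) ha0)
  obtain ⟨l, hl⟩ := hcomplete (fun n => F (F^[n] x₀)) (by
    have h1 : Tendsto (fun p : ℕ × ℕ => a * (a ^ p.1 * E + a ^ p.2 * E)) atTop (nhds 0) := by
      rw [← prod_atTop_atTop_eq]
      simpa using ((hgeom0.comp tendsto_fst).add (hgeom0.comp tendsto_snd)).const_mul a
    exact squeeze_zero (fun p => hCS_nonneg _ _ _) (fun p => (hmax _ _).trans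
      (mul_le_mul_of_nonneg_left (add_le_add (hgeom _) (hgeom _)) ha0)) h1)
  have hfix : F l = l := by
    by_contra hne
    set D := CS l l (F l) with hD
    have hDpos : 0 < D := lt_of_le_of_ne (hCS_nonneg _ _ _) fun h =>
      hne ((hCS_eq l l (F l)).1 h.symm).2.symm
    have hαD : α D ≤ D := by simpa using hα_le l 0
    have hα_self : ∀ t, 0 ≤ t → α t ≤ t := by
      intro t ht
      have h := hα_mul D (t / D) hDpos.le (by positivity)
      rw [div_mul_cancel₀ _ hDpos.ne'] at h
      calc α t ≤ t / D * α D := h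
        _ ≤ t / D * D := mul_le_mul_of_nonneg_left hαD (by positivity)
        _ = t := div_mul_cancel₀ _ hDpos.ne'
    have hbound : ∀ n : ℕ, D ≤
        2 * CS (F (F^[n] x₀)) (F (F^[n] x₀)) l + a * (D + a ^ n * E) := by
      intro n
      have h1 := hCS_tri l l (F l) (F (F^[n] x₀))
      rw [hsymm l (F (F^[n] x₀))] at h1
      have h2 := hα_self _ (hCS_nonneg (F (F^[n] x₀)) (F (F^[n] x₀)) l)
      have h3 := hα_self _ (hCS_nonneg (F l) (F l) (F (F^[n] x₀)))
      have h4 := hmax l (F^[n] x₀)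
      rw [← hsymm l (F l)] at h4
      have h5 := mul_le_mul_of_nonneg_left (hgeom n) ha0
      linarith
    have hlim' : Tendsto (fun n : ℕ =>
        2 * CS (F (F^[n] x₀)) (F (F^[n] x₀)) l + a * (D + a ^ n * E))
        atTop (nhds (a * D)) := by
      simpa using (hl.const_mul 2).add ((hgeom0.const_add D).const_mul a)
    have := ge_of_tendsto' hlim' hbound
    nlinarith
  refine ⟨l, hfix, fun y hy => ?_⟩
  have h := hcontr y l
  have hy' : F y = y := hy
  rw [hy', hfix, (hCS_eq y y y).2 ⟨rfl, rfl⟩, (hCS_eq l l l).2 ⟨rfl, rfl⟩, max_self,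
    mul_zero] at h
  exact ((hCS_eq y y l).1 (le_antisymm h (hCS_nonneg _ _ _))).2
end

section
/- For every natural number m ≥ 3, the equation v^m − (m⁴ − 1)·v^{m+1} − m⁴·v + 1 = 0 has exactly one real solution v in the interval [0,1]. -/
/-!
The left-hand side is continuous, equals `1` at `v = 0` and `3 - 2 m⁴ < 0` at `v = 1`, so it has a
zero in `[0, 1]`. It is strictly decreasing there: `v ↦ v ^ m` is `m`-Lipschitz on `[0, 1]`
(`pow_sub_pow_le_mul_sub`), so the only increasing term is dominated by `m⁴ v`, as `m < m⁴`.
-/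

theorem pow_sub_pow_le_mul_sub {a b : ℝ} (ha : 0 ≤ a) (hab : a ≤ b) (hb : b ≤ 1) (k : ℕ) :
    b ^ k - a ^ k ≤ k * (b - a) := by
  induction k with
  | zero => simp
  | succ k ih =>
    have h1 : a ^ k ≤ 1 := pow_le_one₀ ha (hab.trans hb)
    have h2 : a ^ k ≤ b ^ k := pow_le_pow_left₀ ha hab k
    have h3 : b * (b ^ k - a ^ k) ≤ b ^ k - a ^ k :=
      mul_le_of_le_one_left (sub_nonneg.2 h2) hb
    have h4 : (b - a) * a ^ k ≤ b - a :=
      mul_le_of_le_one_right (sub_nonneg.2 hab) h1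
    push_cast
    linear_combination ih + h3 + h4

/-- For every natural number `m ≥ 3`, the equation
`v^m − (m⁴ − 1)·v^(m+1) − m⁴·v + 1 = 0` has exactly one real solution in
`[0, 1]`. -/
theorem polynomial_equation_unique_solution (m : ℕ) (hm : 3 ≤ m) :
    ∃! v : ℝ, v ∈ Set.Icc (0 : ℝ) 1 ∧
      v ^ m - ((m : ℝ) ^ 4 - 1) * v ^ (m + 1) - (m : ℝ) ^ 4 * v + 1 = 0 := by
  have hm' : (3 : ℝ) ≤ m := by exact_mod_cast hm
  have hM : (m : ℝ) < (m : ℝ) ^ 4 := lt_self_pow₀ (by linarith) (by norm_num)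
  set f : ℝ → ℝ := fun v => v ^ m - ((m : ℝ) ^ 4 - 1) * v ^ (m + 1) - (m : ℝ) ^ 4 * v + 1 with hf
  have hanti : StrictAntiOn f (Set.Icc 0 1) := by
    intro a ha b hb hab
    have h1 := pow_sub_pow_le_mul_sub ha.1 hab.le hb.2 m
    have h2 : ((m : ℝ) ^ 4 - 1) * a ^ (m + 1) ≤ ((m : ℝ) ^ 4 - 1) * b ^ (m + 1) :=
      mul_le_mul_of_nonneg_left (pow_le_pow_left₀ ha.1 hab.le _) (by linarith)
    have h3 : (m : ℝ) * (b - a) < (m : ℝ) ^ 4 * (b - a) :=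
      mul_lt_mul_of_pos_right hM (sub_pos.2 hab)
    simp only [hf]
    linarith
  have hcont : ContinuousOn f (Set.Icc 0 1) := by
    simp only [hf]
    fun_prop
  have h0 : f 0 = 1 := by
    have : m ≠ 0 := by omega
    simp [hf, this]
  have h1 : f 1 = 3 - 2 * (m : ℝ) ^ 4 := by
    simp only [hf, one_pow]
    ring
  obtain ⟨v, hv, hfv⟩ : (0 : ℝ) ∈ f '' Set.Icc 0 1 :=
    intermediate_value_Icc' zero_le_one hcont ⟨by rw [h1]; linarith, by rw [h0]; norm_num⟩
  exact ⟨v, ⟨hv, hfv⟩, fun w hw => hanti.injOn hw.1 hv (hw.2.trans hfv.symm)⟩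
end
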